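/- arXiv:1607.04501 — 8 statements merged into one kernel-verified Lean document; each statement's English description precedes it below -/
import Mathlib

section
/- For any integers N ≥ 1 and 1 ≤ k < l, there exists an algorithm using only the moves φ_k and φ_l which couples the first N balls, and whose length is at most N + 4l². -/
/-!
A configuration is encoded by its set `D ⊆ ℕ` of separators, the partial sums `binSum X t`.
In this picture (`sepSet_move`) the move `φ_n` advances by one the largest separator smaller
than `n` together with all the larger ones, and puts back a separator at `0` if that one was moved.
The `n`-ball projection is the part of `D` below `n`, and every move `φ_j` with `j ≤ n` turns
agreement below `n` into agreement below `n + 1`. Hence it suffices to couple the first `l` balls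
in at most `4 l²` moves, and `N` further moves couple the first `N` balls.

Iterating `φ_k` makes the configuration periodic (`Settled`): after at most `k²` moves there is at
most one separator in `(0, k)`, and from then on the separators are the numbers congruent to a phase
`p ∈ [1, k]` modulo `k`, below a level growing by one with each move, while `p` itself advances
by one modulo `k`. So `k ⌊l/k⌋` more moves give a periodic configuration below `l`.

To merge the phases, let `A(p)` be the sum of `l - x` over the separators `x ∈ (0, l)` of the
periodic configuration of phase `p` (`phaseWeight`). While `(0, l)` contains a separator, `φ_l`
advances only the largest one there and lowers this potential by exactly one. As
`A(k) ≤ A(p) < A(k) + (l - p)`, after `φ_l^{A(k)}` the potential is less than `l - p`, so the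
separator at `p` has moved, and the separators are still at distance at least `k` from each other.
Then `φ_k^{k⌊l/k⌋}` restores a periodic configuration with a phase larger than `p`, or equal to `k`
(`round_phase`). After `k` such rounds the phase is `k`, whatever the initial configuration. The
length is controlled by `k A(k) ≤ l²`.
-/

open Finset

/-! Bins are indexed by `t : ℕ`, where index `t` stands for the bin labeled `-t`
in the paper (so `t = 0` is the rightmost bin).  A configuration is a function
`X : ℕ → ℕ`, `X t` being the number of balls in bin `t`. -/

/-- `binSum X t` is the number of balls in bins `0, …, t-1`, i.e. strictly to the
right of bin `t`.  In the paper's notation this is `Σ_{j = -t+1}^{0} X(j)`. -/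
def binSum (X : ℕ → ℕ) (t : ℕ) : ℕ := ∑ m ∈ Finset.range t, X m

/-- An infinite configuration: every bin contains a positive number of balls. -/
def IsInfConf (X : ℕ → ℕ) : Prop := ∀ t, 0 < X t

/-- An `n`-configuration: for some `p ≥ 1`, bins `0, …, p-1` are nonempty, all the
other bins are empty, and the total number of balls is `n`. -/
def IsNConf (n : ℕ) (X : ℕ → ℕ) : Prop :=
  ∃ p : ℕ, 1 ≤ p ∧ (∀ t, t < p → 0 < X t) ∧ (∀ t, p ≤ t → X t = 0) ∧ binSum X p = n

/-- The `n`-ball projection `π_n`: keep the `n` rightmost balls, erase the others.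
(Truncated subtraction makes the value `0` as soon as `binSum X t ≥ n`.) -/
def proj (n : ℕ) (X : ℕ → ℕ) : ℕ → ℕ := fun t => min (X t) (n - binSum X t)

/-- The move `φ_k` on infinite configurations: if the rightmost bin contains at
least `k` balls, create a new rightmost bin containing one ball (shifting
everything); otherwise add one ball to the bin immediately to the right of the
bin containing the `k`-th ball counted from the right. -/
noncomputable def move (k : ℕ) (X : ℕ → ℕ) : ℕ → ℕ :=
  if k ≤ X 0 then fun t => if t = 0 then 1 else X (t - 1)
  else fun t => if t = sInf {b : ℕ | k ≤ binSum X (b + 1)} - 1 then X t + 1 else X t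

/-- Delete one ball from the leftmost nonempty bin. -/
noncomputable def removeLeft (X : ℕ → ℕ) : ℕ → ℕ :=
  fun t => if t = sSup {b : ℕ | 0 < X b} then X t - 1 else X t

/-- The move `φ_k` on `n`-configurations: add a ball to the bin immediately to the
right of the bin containing the `k`-th ball from the right (creating a new
rightmost bin if needed), then delete one ball from the leftmost nonempty bin. -/
noncomputable def moveFin (k : ℕ) (X : ℕ → ℕ) : ℕ → ℕ := removeLeft (move k X)

/-- Apply an algorithm, i.e. a finite composition of moves, to an infinite
configuration.  `applyAlg [k₁, …, kₘ] X = φ_{k₁}(φ_{k₂}(⋯ φ_{kₘ}(X)))`. -/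
noncomputable def applyAlg (w : List ℕ) (X : ℕ → ℕ) : ℕ → ℕ := w.foldr move X

/-- Apply an algorithm to a finite configuration. -/
noncomputable def applyAlgFin (w : List ℕ) (X : ℕ → ℕ) : ℕ → ℕ := w.foldr moveFin X

/-- The configuration denoted `[a₁, …, a_p]` in the paper: the list is read from
the leftmost nonempty bin to the rightmost bin. -/
def ofList (L : List ℕ) : ℕ → ℕ := fun t => L.reverse.getD t 0

/-- The distinguished `l`-configurations `X_i` (for `l = k*d + r`, `1 ≤ r ≤ k`):
`X_0 = [k, …, k, r]` (`d` bins of `k` balls), `X_i = [i, k, …, k, r-i]` (`d` bins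
of `k` balls) for `1 ≤ i ≤ r-1`, and `X_i = [i, k, …, k, k+r-i]` (`d-1` bins of
`k` balls) for `r ≤ i ≤ k-1`. -/
def distConf (k d r i : ℕ) : ℕ → ℕ :=
  if i = 0 then ofList (List.replicate d k ++ [r])
  else if i < r then ofList (i :: (List.replicate d k ++ [r - i]))
  else ofList (i :: (List.replicate (d - 1) k ++ [k + r - i]))

/-- The `l`-configurations `Y_j`: `Y_0 = [l]` and `Y_j = [j, l-j]` for `1 ≤ j ≤ l-1`. -/
def yConf (l j : ℕ) : ℕ → ℕ := if j = 0 then ofList [l] else ofList [j, l - j]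

/-- The map `f` from the paper: `f(i) = (k - l + d·i)₊` for `0 ≤ i ≤ k-r-1` and
`f(i) = (k - (d+1)(k-i))₊` for `k-r ≤ i ≤ k-1` (truncated ℕ-subtraction realizes
the positive part). -/
def fMap (k l d r : ℕ) (i : ℕ) : ℕ :=
  if i < k - r then k + d * i - l else k - (d + 1) * (k - i)

/-- The algorithm `Ψ = φ_k^{l-k} ∘ φ_l^{dr + k·d(d-1)/2} ∘ φ_k^{k-r}` acting on
`l`-configurations. -/
noncomputable def Psi (k l d r : ℕ) (X : ℕ → ℕ) : ℕ → ℕ :=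
  (moveFin k)^[l - k] ((moveFin l)^[d * r + k * (d * (d - 1)) / 2] ((moveFin k)^[k - r] X))

/-! ### Separator sets -/

/-- The set of separators of a configuration: the numbers of balls in the initial segments of bins
(counted from the right).  It always contains `0`, and it determines the configuration. -/
def sepSet (X : ℕ → ℕ) : Set ℕ := Set.range (binSum X)

/-- The move `φ_n` on separator sets.  A separator `x` is blocked when another separator lies in
`(x, n)`; blocked separators stay, the others advance by one, and `0` is always put back. -/
def sepStep (n : ℕ) (D : Set ℕ) : Set ℕ :=
  {x | x = 0 ∨ (x ∈ D ∧ ∃ y ∈ D, x < y ∧ y < n) ∨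
    ∃ z, x = z + 1 ∧ z ∈ D ∧ ∀ y ∈ D, z < y → n ≤ y}

theorem zero_mem_sepStep (n : ℕ) (D : Set ℕ) : 0 ∈ sepStep n D := Or.inl rfl

theorem binSum_succ (X : ℕ → ℕ) (t : ℕ) : binSum X (t + 1) = binSum X t + X t :=
  Finset.sum_range_succ _ _

theorem binSum_zero (X : ℕ → ℕ) : binSum X 0 = 0 := rfl

theorem binSum_strictMono {X : ℕ → ℕ} (hX : IsInfConf X) : StrictMono (binSum X) :=
  strictMono_nat_of_lt_succ fun t => by rw [binSum_succ]; have := hX t; omega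

theorem isInfConf_move {X : ℕ → ℕ} (n : ℕ) (hX : IsInfConf X) : IsInfConf (move n X) := by
  intro t
  unfold move
  split_ifs with h
  · dsimp only
    split_ifs
    · exact Nat.one_pos
    · exact hX _
  · dsimp only
    split_ifs
    · exact Nat.succ_pos _
    · exact hX _

theorem sepSet_move {X : ℕ → ℕ} (n : ℕ) (hX : IsInfConf X) :
    sepSet (move n X) = sepStep n (sepSet X) := by
  have hS := binSum_strictMono hX
  by_cases h : n ≤ X 0
  · have hm : ∀ t, binSum (move n X) (t + 1) = binSum X t + 1 := by
      intro t
      induction t with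
      | zero => simp [binSum, move, h]
      | succ t ih => rw [binSum_succ, ih, binSum_succ]; simp [move, h]; omega
    have h1 : ∀ t, 0 < t → n ≤ binSum X t := by
      intro t ht
      have := hS.monotone (show 1 ≤ t from ht)
      rw [binSum_succ X 0, binSum_zero] at this
      omega
    ext x
    constructor
    · rintro ⟨t, rfl⟩
      cases t with
      | zero => exact Or.inl rfl
      | succ t =>
        refine Or.inr (Or.inr ⟨binSum X t, hm t, ⟨t, rfl⟩, ?_⟩)
        rintro _ ⟨s, rfl⟩ hs
        exact h1 s (lt_of_le_of_lt (Nat.zero_le _) (hS.lt_iff_lt.1 hs))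
    · rintro (rfl | ⟨⟨t, rfl⟩, _, ⟨s, rfl⟩, hs, hsn⟩ | ⟨_, rfl, ⟨t, rfl⟩, -⟩)
      · exact ⟨0, rfl⟩
      · have := h1 s (lt_of_le_of_lt (Nat.zero_le _) (hS.lt_iff_lt.1 hs))
        omega
      · exact ⟨t + 1, hm t⟩
  · have hne : {b : ℕ | n ≤ binSum X (b + 1)}.Nonempty :=
      ⟨n, le_trans (Nat.le_succ n) (hS.id_le (n + 1))⟩
    -- `c` is the bin of the `n`-th ball; here it is not the rightmost one
    obtain ⟨c, hc⟩ : ∃ c, c = sInf {b : ℕ | n ≤ binSum X (b + 1)} := ⟨_, rfl⟩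
    have hc1 : n ≤ binSum X (c + 1) := by rw [hc]; exact Nat.sInf_mem hne
    have hc0 : 0 < c := by
      rcases Nat.eq_zero_or_pos c with h0 | h0
      · rw [h0, binSum_succ, binSum_zero] at hc1; omega
      · exact h0
    have hc2 : binSum X c < n := by
      have : c - 1 ∉ {b : ℕ | n ≤ binSum X (b + 1)} :=
        Nat.notMem_of_lt_sInf (by rw [← hc]; omega)
      simp only [Set.mem_ofPred_eq, Nat.sub_add_cancel hc0] at this
      omega
    have hm : ∀ t, binSum (move n X) t = binSum X t + if c ≤ t then 1 else 0 := by
      intro t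
      induction t with
      | zero => simp [binSum_zero]; omega
      | succ t ih =>
        rw [binSum_succ, ih, binSum_succ]
        simp only [move, h, if_false, ← hc]
        split_ifs <;> omega
    ext x
    constructor
    · rintro ⟨t, rfl⟩
      rw [hm]
      split_ifs with hct
      · refine Or.inr (Or.inr ⟨binSum X t, rfl, ⟨t, rfl⟩, ?_⟩)
        rintro _ ⟨s, rfl⟩ hs
        have h2 := hS.lt_iff_lt.1 hs
        exact hc1.trans (hS.monotone (by omega))
      · exact Or.inr (Or.inl ⟨⟨t, rfl⟩, binSum X c, ⟨c, rfl⟩, hS (by omega), hc2⟩)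
    · rintro (rfl | ⟨⟨t, rfl⟩, _, ⟨s, rfl⟩, hs, hsn⟩ | ⟨_, rfl, ⟨t, rfl⟩, ht⟩)
      · exact ⟨0, rfl⟩
      · refine ⟨t, ?_⟩
        have h2 := hS.lt_iff_lt.1 hs
        have h3 := hS.lt_iff_lt.1 (lt_of_lt_of_le hsn hc1)
        rw [hm, if_neg (by omega), add_zero]
      · refine ⟨t, ?_⟩
        rw [hm, if_pos]
        by_contra hct
        have := ht _ ⟨c, rfl⟩ (hS (by omega))
        omega

theorem isInfConf_applyAlg {X : ℕ → ℕ} (hX : IsInfConf X) (w : List ℕ) :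
    IsInfConf (applyAlg w X) := by
  induction w with
  | nil => exact hX
  | cons a w ih => exact isInfConf_move a ih

theorem sepSet_applyAlg {X : ℕ → ℕ} (hX : IsInfConf X) (w : List ℕ) :
    sepSet (applyAlg w X) = w.foldr sepStep (sepSet X) := by
  induction w with
  | nil => rfl
  | cons a w ih =>
    rw [List.foldr_cons, ← ih]
    exact sepSet_move a (isInfConf_applyAlg hX w)

/-- The `n`-ball projection only depends on the separators smaller than `n`. -/
theorem proj_eq_of_sepSet {X Y : ℕ → ℕ} (hX : IsInfConf X) (hY : IsInfConf Y) (n : ℕ)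
    (h : ∀ x < n, x ∈ sepSet X ↔ x ∈ sepSet Y) : proj n X = proj n Y := by
  -- one inequality in the comparison of truncated partial sums, by symmetry of `X` and `Y`
  have key : ∀ {X Y : ℕ → ℕ}, IsInfConf X → IsInfConf Y → (∀ x < n, x ∈ sepSet X → x ∈ sepSet Y) →
      ∀ t, binSum X t = binSum Y t → binSum Y (t + 1) ≤ binSum X (t + 1) ∨
        n ≤ binSum X (t + 1) := by
    intro X Y hX hY h t ht
    by_cases hlt : binSum X (t + 1) < n
    · left
      obtain ⟨s, hs⟩ := h _ hlt ⟨t + 1, rfl⟩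
      have h1 := binSum_strictMono hX (Nat.lt_succ_self t)
      rw [ht] at h1
      have h2 : binSum Y t < binSum Y s := by rw [hs]; exact h1
      have h3 := (binSum_strictMono hY).lt_iff_lt.1 h2
      rw [← hs]
      exact (binSum_strictMono hY).monotone h3
    · right; omega
  have hmin : ∀ t, min (binSum X t) n = min (binSum Y t) n := by
    intro t
    induction t with
    | zero => rfl
    | succ t ih =>
      have h1 := binSum_strictMono hX (Nat.lt_succ_self t)
      have h2 := binSum_strictMono hY (Nat.lt_succ_self t)
      simp only [Nat.succ_eq_add_one] at h1 h2
      by_cases he : binSum X t = binSum Y t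
      · have h3 := key hX hY (fun x hx => (h x hx).1) t he
        have h4 := key hY hX (fun x hx => (h x hx).2) t he.symm
        omega
      · omega
  funext t
  have h1 := hmin t
  have h2 := hmin (t + 1)
  rw [binSum_succ, binSum_succ] at h2
  simp only [proj]
  omega

/-- Once the first `m ≥ n` balls agree, a move `φ_n` makes one more ball agree. -/
theorem sepStep_local {n m : ℕ} (hnm : n ≤ m) {D E : Set ℕ} (h : ∀ x < m, x ∈ D ↔ x ∈ E) :
    ∀ x < m + 1, x ∈ sepStep n D ↔ x ∈ sepStep n E := by
  have key : ∀ {D E : Set ℕ}, (∀ x < m, x ∈ D ↔ x ∈ E) →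
      ∀ x < m + 1, x ∈ sepStep n D → x ∈ sepStep n E := by
    intro D E h x hx
    rintro (rfl | ⟨hxD, y, hy, hxy, hyn⟩ | ⟨z, rfl, hz, hzy⟩)
    · exact Or.inl rfl
    · exact Or.inr (Or.inl ⟨(h x (by omega)).1 hxD, y, (h y (by omega)).1 hy, hxy, hyn⟩)
    · refine Or.inr (Or.inr ⟨z, rfl, (h z (by omega)).1 hz, fun y hy hlt => ?_⟩)
      by_cases hym : y < m
      · exact hzy y ((h y hym).2 hy) hlt
      · omega
  exact fun x hx => ⟨key h x hx, key (fun x hx => (h x hx).symm) x hx⟩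

theorem iterate_sepStep_local {n m : ℕ} (hnm : n ≤ m) {D E : Set ℕ}
    (h : ∀ x < m, x ∈ D ↔ x ∈ E) (t : ℕ) :
    ∀ x < m + t, x ∈ (sepStep n)^[t] D ↔ x ∈ (sepStep n)^[t] E := by
  induction t with
  | zero => exact h
  | succ t ih =>
    rw [Function.iterate_succ_apply', Function.iterate_succ_apply']
    exact sepStep_local (hnm.trans (Nat.le_add_right m t)) ih

theorem zero_mem_iterate {n : ℕ} {D : Set ℕ} (h0 : 0 ∈ D) (t : ℕ) : 0 ∈ (sepStep n)^[t] D := by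
  cases t with
  | zero => exact h0
  | succ t => rw [Function.iterate_succ_apply']; exact zero_mem_sepStep _ _

/-! ### Periodic configurations and the move `φ_k` -/

/-- Below `m`, the nonzero separators are exactly the numbers congruent to the phase `p`
modulo `k`; that is, up to the truncations at both ends, all bins hold `k` balls. -/
def Settled (k p m : ℕ) (D : Set ℕ) : Prop :=
  0 ∈ D ∧ ∀ x, 0 < x → x < m → (x ∈ D ↔ x ≡ p [MOD k])

theorem eq_of_modEq_of_lt {k x y p : ℕ} (hx : x ≡ p [MOD k]) (hy : y ≡ p [MOD k]) (hxy : x ≤ y)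
    (hlt : y < x + k) : x = y := by
  have h : k ∣ y - x := (Nat.modEq_iff_dvd' hxy).1 (hx.trans hy.symm)
  have := Nat.eq_zero_of_dvd_of_lt h (by omega)
  omega

theorem Settled.step {k p m : ℕ} {D : Set ℕ} (hk : 1 ≤ k) (hm : k ≤ m) (h : Settled k p m D) :
    Settled k (p + 1) (m + 1) (sepStep k D) := by
  obtain ⟨h0, h⟩ := h
  refine ⟨zero_mem_sepStep _ _, fun x hx hxm => ?_⟩
  constructor
  · rintro (rfl | ⟨hxD, y, hy, hxy, hyn⟩ | ⟨z, rfl, hz, hzy⟩)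
    · omega
    · have h1 := (h x hx (by omega)).1 hxD
      have h2 := (h y (by omega) (by omega)).1 hy
      have := eq_of_modEq_of_lt h1 h2 hxy.le (by omega)
      omega
    · rcases Nat.eq_zero_or_pos z with rfl | hz0
      · -- the residue of `p` in `[0, k)` is a separator, unless it is `0`
        have hp : p % k = 0 := by
          by_contra hne
          have hlt := Nat.mod_lt p hk
          have := hzy (p % k) ((h _ (by omega) (by omega)).2 (Nat.mod_modEq p k)) (by omega)
          omega
        exact Nat.ModEq.add_right 1 (show 0 % k = p % k by simp [hp])
      · exact ((h z hz0 (by omega)).1 hz).add_right 1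
  · intro hmod
    obtain ⟨z, rfl⟩ : ∃ z, x = z + 1 := ⟨x - 1, by omega⟩
    have hmod' : z ≡ p [MOD k] := Nat.ModEq.add_right_cancel' 1 hmod
    refine Or.inr (Or.inr ⟨z, rfl, ?_, fun y hy hlt => ?_⟩)
    · rcases Nat.eq_zero_or_pos z with rfl | hz0
      · exact h0
      · exact (h z hz0 (by omega)).2 hmod'
    · by_contra hyk
      have := eq_of_modEq_of_lt hmod' ((h y (by omega) (by omega)).1 hy) hlt.le (by omega)
      omega

theorem Settled.iterate {k p m : ℕ} {D : Set ℕ} (hk : 1 ≤ k) (hm : k ≤ m) (h : Settled k p m D)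
    (t : ℕ) : Settled k (p + t) (m + t) ((sepStep k)^[t] D) := by
  induction t with
  | zero => exact h
  | succ t ih =>
    rw [Function.iterate_succ_apply']
    exact ih.step hk (hm.trans (Nat.le_add_right m t))

theorem Settled.of_modEq {k p q m n : ℕ} {D : Set ℕ} (h : Settled k p m D) (hpq : p ≡ q [MOD k])
    (hn : n ≤ m) : Settled k q n D :=
  ⟨h.1, fun x hx hxn => (h.2 x hx (by omega)).trans ⟨fun h => h.trans hpq, fun h => h.trans hpq.symm⟩⟩

/-- With at most one nonzero separator below `k`, the configuration is settled below `k`; its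
phase is that separator, or `k` if there is none. -/
theorem exists_settled_of_subsingleton {k : ℕ} (hk : 1 ≤ k) {D : Set ℕ} (h0 : 0 ∈ D)
    (h : ∀ x ∈ D, ∀ y ∈ D, 0 < x → x < y → k ≤ y) {a : ℕ} (ha : a ≤ k)
    (hD : ∀ x ∈ D, 0 < x → x < k → a ≤ x) :
    ∃ q, 1 ≤ q ∧ a ≤ q ∧ q ≤ k ∧ Settled k q k D := by
  by_cases hex : ∃ q ∈ D, 0 < q ∧ q < k
  · obtain ⟨q, hq, hq0, hqk⟩ := hex
    refine ⟨q, hq0, hD q hq hq0 hqk, hqk.le, h0, fun x hx hxk => ⟨fun hxD => ?_, fun hxq => ?_⟩⟩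
    · have h1 := h x hxD q hq hx
      have h2 := h q hq x hxD hq0
      have : x = q := by omega
      rw [this]
    · rwa [show x = q from hxq.eq_of_lt_of_lt hxk hqk]
  · refine ⟨k, hk, ha, le_rfl, h0, fun x hx hxk => ⟨fun hxD => (hex ⟨x, hxD, hx, hxk⟩).elim,
      fun hxq => ?_⟩⟩
    have : x % k = 0 := by rw [hxq]; exact Nat.mod_self k
    rw [Nat.mod_eq_of_lt hxk] at this
    omega

/-- After `k * (l / k)` moves `φ_k` the phase is unchanged, and the periodic pattern has spread
from the first `k` to the first `l` balls. -/
theorem Settled.spread {k l q : ℕ} (hk : 1 ≤ k) {D : Set ℕ} (h : Settled k q k D) :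
    Settled k q l ((sepStep k)^[k * (l / k)] D) := by
  refine (h.iterate hk le_rfl (k * (l / k))).of_modEq ?_ ?_
  · simp [Nat.ModEq]
  · have := Nat.div_add_mod l k
    have := Nat.mod_lt l hk
    omega

/-! ### The potential -/

open scoped Classical in
/-- The total distance from the nonzero separators below `n` to the position `n`. -/
noncomputable def weight (n : ℕ) (D : Set ℕ) : ℕ :=
  ∑ x ∈ (Finset.Ioo 0 n).filter (· ∈ D), (n - x)

theorem le_weight {n p : ℕ} {D : Set ℕ} (hp : p ∈ D) (h0 : 0 < p) (hn : p < n) :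
    n - p ≤ weight n D := by
  classical
  unfold weight
  exact Finset.single_le_sum (f := fun x => n - x) (fun _ _ => Nat.zero_le _)
    (by simp [hp, h0, hn])

theorem weight_le (n : ℕ) (D : Set ℕ) : weight n D ≤ n ^ 2 := by
  classical
  unfold weight
  calc _ ≤ ∑ x ∈ Finset.range n, n := by
        refine (Finset.sum_le_sum fun x _ => Nat.sub_le n x).trans
          (Finset.sum_le_sum_of_subset fun x hx => ?_)
        simp only [Finset.mem_filter, Finset.mem_Ioo] at hx
        simp [hx.1.2]
    _ = n ^ 2 := by simp [sq]

theorem exists_of_weight_pos {n : ℕ} {D : Set ℕ} (h : 0 < weight n D) :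
    ∃ x ∈ D, 0 < x ∧ x < n := by
  classical
  by_contra hne
  have : weight n D = 0 := by
    unfold weight
    refine Finset.sum_eq_zero fun x hx => ?_
    simp only [Finset.mem_filter, Finset.mem_Ioo] at hx
    exact (hne ⟨x, hx.2, hx.1⟩).elim
  omega

/-- If there is a nonzero separator below `n`, then `φ_n` moves the largest such separator `q`
and, below `n`, nothing else. -/
theorem sepStep_of_nonempty {n : ℕ} {D : Set ℕ} (h : ∃ x ∈ D, 0 < x ∧ x < n) :
    ∃ q ∈ D, 0 < q ∧ q < n ∧ (∀ y ∈ D, y < n → y ≤ q) ∧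
      ∀ x, 0 < x → x < n → (x ∈ sepStep n D ↔ (x ∈ D ∧ x < q) ∨ x = q + 1) := by
  classical
  obtain ⟨a, ha, ha0, han⟩ := h
  obtain ⟨q, hq, hmax⟩ := Finset.exists_max_image ((Finset.Ioo 0 n).filter (· ∈ D)) id
    ⟨a, by simp [ha, ha0, han]⟩
  simp only [Finset.mem_filter, Finset.mem_Ioo, id] at hq hmax
  obtain ⟨⟨hq0, hqn⟩, hqD⟩ := hq
  have hmax' : ∀ y ∈ D, y < n → y ≤ q := fun y hy hyn => by
    rcases Nat.eq_zero_or_pos y with rfl | hy0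
    · omega
    · exact hmax y ⟨⟨hy0, hyn⟩, hy⟩
  refine ⟨q, hqD, hq0, hqn, hmax', fun x hx hxn => ⟨?_, ?_⟩⟩
  · rintro (rfl | ⟨hxD, y, hy, hxy, hyn⟩ | ⟨z, rfl, hz, hzy⟩)
    · omega
    · exact Or.inl ⟨hxD, lt_of_lt_of_le hxy (hmax' y hy hyn)⟩
    · right
      have h1 := hmax' z hz (by omega)
      have h2 := hzy q hqD
      omega
  · rintro (⟨hxD, hxq⟩ | rfl)
    · exact Or.inr (Or.inl ⟨hxD, q, hqD, hxq, hqn⟩)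
    · refine Or.inr (Or.inr ⟨q, rfl, hqD, fun y hy hlt => ?_⟩)
      by_contra hyn
      have := hmax' y hy (by omega)
      omega

theorem weight_sepStep {n : ℕ} {D : Set ℕ} (h : ∃ x ∈ D, 0 < x ∧ x < n) :
    weight n (sepStep n D) + 1 = weight n D := by
  classical
  obtain ⟨q, hq, hq0, hqn, hmax, hstep⟩ := sepStep_of_nonempty h
  set F := (Finset.Ioo 0 n).filter fun x => x ∈ D ∧ x < q with hF
  have hqF : q ∉ F := by simp [hF]
  have hqF' : q + 1 ∉ F := by simp [hF]
  have h1 : (Finset.Ioo 0 n).filter (· ∈ D) = insert q F := by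
    ext x
    simp only [hF, Finset.mem_filter, Finset.mem_Ioo, Finset.mem_insert]
    constructor
    · rintro ⟨hx, hxD⟩
      have := hmax x hxD hx.2
      by_cases hxq : x = q
      · exact Or.inl hxq
      · exact Or.inr ⟨hx, hxD, by omega⟩
    · rintro (rfl | ⟨hx, hxD, -⟩)
      · exact ⟨⟨hq0, hqn⟩, hq⟩
      · exact ⟨hx, hxD⟩
  have e1 : weight n D = (n - q) + ∑ x ∈ F, (n - x) := by
    rw [weight, h1, Finset.sum_insert hqF]
  by_cases hlast : q + 1 < n
  · have h2 : (Finset.Ioo 0 n).filter (· ∈ sepStep n D) = insert (q + 1) F := by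
      ext x
      simp only [hF, Finset.mem_filter, Finset.mem_Ioo, Finset.mem_insert]
      constructor
      · rintro ⟨hx, hxD⟩
        rcases (hstep x hx.1 hx.2).1 hxD with h | h
        · exact Or.inr ⟨hx, h⟩
        · exact Or.inl h
      · rintro (rfl | ⟨hx, hxD⟩)
        · exact ⟨⟨by omega, hlast⟩, (hstep _ (by omega) hlast).2 (Or.inr rfl)⟩
        · exact ⟨hx, (hstep _ hx.1 hx.2).2 (Or.inl hxD)⟩
    have e2 : weight n (sepStep n D) = (n - (q + 1)) + ∑ x ∈ F, (n - x) := by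
      rw [weight, h2, Finset.sum_insert hqF']
    omega
  · have h2 : (Finset.Ioo 0 n).filter (· ∈ sepStep n D) = F := by
      ext x
      simp only [hF, Finset.mem_filter, Finset.mem_Ioo]
      constructor
      · rintro ⟨hx, hxD⟩
        rcases (hstep x hx.1 hx.2).1 hxD with h | h
        · exact ⟨hx, h⟩
        · omega
      · rintro ⟨hx, hxD⟩
        exact ⟨hx, (hstep _ hx.1 hx.2).2 (Or.inl hxD)⟩
    have e2 : weight n (sepStep n D) = ∑ x ∈ F, (n - x) := by rw [weight, h2]
    omega

/-- Once the potential is exhausted there is no nonzero separator below `k`, so the configuration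
is settled, and it remains so. -/
theorem exists_settled_iterate {k : ℕ} (hk : 1 ≤ k) (t : ℕ) :
    ∀ D : Set ℕ, 0 ∈ D → weight k D ≤ t →
      ∃ q, 1 ≤ q ∧ q ≤ k ∧ Settled k q k ((sepStep k)^[t] D) := by
  have empty : ∀ (t : ℕ) (D : Set ℕ), 0 ∈ D → (¬ ∃ x ∈ D, 0 < x ∧ x < k) →
      ∃ q, 1 ≤ q ∧ q ≤ k ∧ Settled k q k ((sepStep k)^[t] D) := by
    intro t D h0 hne
    obtain ⟨q, -, -, -, hq⟩ := exists_settled_of_subsingleton hk h0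
      (fun x hx y hy hx0 hxy => by
        by_contra hyk
        exact hne ⟨x, hx, hx0, by omega⟩) (Nat.zero_le k) (fun _ _ _ _ => Nat.zero_le _)
    have h1 := hq.iterate hk le_rfl t
    rcases Nat.eq_zero_or_pos ((q + t) % k) with h2 | h2
    · exact ⟨k, hk, le_rfl, h1.of_modEq (show (q + t) % k = k % k by simp [h2]) (by omega)⟩
    · exact ⟨(q + t) % k, h2, (Nat.mod_lt _ hk).le,
        h1.of_modEq (Nat.mod_modEq _ _).symm (by omega)⟩
  induction t with
  | zero =>
    intro D h0 hw
    refine empty 0 D h0 ?_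
    rintro ⟨x, hx, hx0, hxk⟩
    have := le_weight hx hx0 hxk
    omega
  | succ t ih =>
    intro D h0 hw
    by_cases hne : ∃ x ∈ D, 0 < x ∧ x < k
    · have := weight_sepStep hne
      exact ih _ (zero_mem_sepStep _ _) (by omega)
    · exact empty _ D h0 hne

/-! ### One round -/

/-- The potential `weight l` of a configuration settled below `l` with phase `p`; the truncated
subtraction makes the terms with `l ≤ p + j * k` vanish. -/
def phaseWeight (k l p : ℕ) : ℕ := ∑ j ∈ Finset.range (l / k + 1), (l - (p + j * k))

theorem Settled.weight_eq {k l p : ℕ} {D : Set ℕ} (hp : 1 ≤ p) (hpk : p ≤ k)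
    (h : Settled k p l D) : weight l D = phaseWeight k l p := by
  classical
  have hk : 0 < k := by omega
  have hinj : Set.InjOn (fun j => p + j * k)
      ((Finset.range (l / k + 1)).filter fun j => p + j * k < l) := by
    intro i _ j _ hij
    exact Nat.eq_of_mul_eq_mul_right hk (Nat.add_left_cancel hij)
  have himg : (Finset.Ioo 0 l).filter (· ∈ D) =
      ((Finset.range (l / k + 1)).filter fun j => p + j * k < l).image fun j => p + j * k := by
    ext x
    simp only [Finset.mem_filter, Finset.mem_Ioo, Finset.mem_image, Finset.mem_range]
    constructor
    · rintro ⟨⟨hx0, hxl⟩, hxD⟩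
      have hmod := (h.2 x hx0 hxl).1 hxD
      have hpx : p ≤ x := by
        by_contra hlt
        have := eq_of_modEq_of_lt hmod (Nat.ModEq.refl p) (by omega) (by omega)
        omega
      obtain ⟨j, hj⟩ := (Nat.modEq_iff_dvd' hpx).1 hmod.symm
      have hjx : p + j * k = x := by rw [mul_comm]; omega
      refine ⟨j, ⟨?_, by omega⟩, hjx⟩
      exact Nat.lt_succ_of_le ((Nat.le_div_iff_mul_le hk).2 (by omega))
    · rintro ⟨j, ⟨-, hjl⟩, rfl⟩
      exact ⟨⟨by omega, hjl⟩, (h.2 _ (by omega) hjl).2 (by simp [Nat.ModEq])⟩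
  rw [weight, himg, Finset.sum_image hinj, phaseWeight, Finset.sum_filter]
  refine Finset.sum_congr rfl fun j _ => ?_
  split_ifs <;> omega

theorem phaseWeight_anti {k l p : ℕ} (hpk : p ≤ k) : phaseWeight k l k ≤ phaseWeight k l p :=
  Finset.sum_le_sum fun j _ => by omega

/-- Shifting the index by one compares the two sums: `p + (j + 1) * k ≥ k + j * k`, strictly
at `j = 0`. -/
theorem phaseWeight_lt {k l p : ℕ} (hp : 1 ≤ p) (hk : 1 ≤ k) (hkl : k < l) :
    phaseWeight k l p < phaseWeight k l k + (l - p) := by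
  have hd : 0 < l / k := Nat.div_pos hkl.le hk
  have h1 : phaseWeight k l p =
      ∑ j ∈ Finset.range (l / k), (l - (p + (j + 1) * k)) + (l - p) := by
    rw [phaseWeight, Finset.sum_range_succ']
    simp
  have h2 : ∑ j ∈ Finset.range (l / k), (l - (p + (j + 1) * k)) <
      ∑ j ∈ Finset.range (l / k), (l - (k + j * k)) := by
    refine Finset.sum_lt_sum (fun j _ => ?_) ⟨0, by simpa using hd, by simp; omega⟩
    rw [add_mul]; omega
  have h3 : ∑ j ∈ Finset.range (l / k), (l - (k + j * k)) ≤ phaseWeight k l k := by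
    rw [phaseWeight, Finset.sum_range_succ]; exact Nat.le_add_right _ _
  omega

theorem mul_phaseWeight_le {k l : ℕ} (hk : 1 ≤ k) : k * phaseWeight k l k ≤ l ^ 2 := by
  have h0 : l - (k + l / k * k) = 0 := by
    have := Nat.div_add_mod l k
    have := Nat.mod_lt l hk
    rw [mul_comm (l / k)]; omega
  have h1 : phaseWeight k l k ≤ l / k * l := by
    rw [phaseWeight, Finset.sum_range_succ, h0, add_zero]
    calc _ ≤ ∑ j ∈ Finset.range (l / k), l := Finset.sum_le_sum fun j _ => Nat.sub_le _ _
      _ = l / k * l := by simp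
  calc k * phaseWeight k l k ≤ k * (l / k * l) := Nat.mul_le_mul_left _ h1
    _ = (k * (l / k)) * l := by ring
    _ ≤ l * l := Nat.mul_le_mul_right _ (Nat.mul_div_le l k)
    _ = l ^ 2 := (sq l).symm

/-- As long as the potential is positive, `φ_l` keeps the nonzero separators below `l` at mutual
distance at least `k` and creates none below `p`. -/
theorem iterate_sepStep_spaced {k l p : ℕ} {D : Set ℕ}
    (hsp : ∀ x ∈ D, ∀ y ∈ D, 0 < x → x < y → y < l → x + k ≤ y)
    (hp : ∀ x ∈ D, 0 < x → x < l → p ≤ x) (t : ℕ) (ht : t ≤ weight l D) :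
    (∀ x ∈ (sepStep l)^[t] D, ∀ y ∈ (sepStep l)^[t] D, 0 < x → x < y → y < l → x + k ≤ y) ∧
      (∀ x ∈ (sepStep l)^[t] D, 0 < x → x < l → p ≤ x) ∧
      weight l ((sepStep l)^[t] D) + t = weight l D := by
  induction t with
  | zero => exact ⟨hsp, hp, rfl⟩
  | succ t ih =>
    obtain ⟨h1, h2, h3⟩ := ih (by omega)
    rw [Function.iterate_succ_apply']
    set E := (sepStep l)^[t] D
    have hne : ∃ x ∈ E, 0 < x ∧ x < l := exists_of_weight_pos (by omega)
    have hw := weight_sepStep hne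
    obtain ⟨q, hq, hq0, hql, hmax, hstep⟩ := sepStep_of_nonempty hne
    refine ⟨fun x hx y hy hx0 hxy hyl => ?_, fun x hx hx0 hxl => ?_, by omega⟩
    · rcases (hstep x hx0 (by omega)).1 hx with ⟨hxE, hxq⟩ | rfl
      · rcases (hstep y (by omega) hyl).1 hy with ⟨hyE, hyq⟩ | rfl
        · exact h1 x hxE y hyE hx0 hxy hyl
        · have := h1 x hxE q hq hx0 hxq hql
          omega
      · rcases (hstep y (by omega) hyl).1 hy with ⟨hyE, hyq⟩ | rfl <;> omega
    · rcases (hstep x hx0 hxl).1 hx with ⟨hxE, -⟩ | rfl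
      · exact h2 x hxE hx0 hxl
      · have := h2 q hq hq0 hql
        omega

/-- The round `φ_k^{k⌊l/k⌋} ∘ φ_l^A`, where `A` is the potential of phase `k`, strictly increases
every phase `p < k` and fixes the phase `k`. -/
theorem round_phase {k l p : ℕ} (hk : 1 ≤ k) (hkl : k < l) {D : Set ℕ} (hp : 1 ≤ p)
    (hpk : p ≤ k) (h : Settled k p l D) :
    ∃ q, 1 ≤ q ∧ min (p + 1) k ≤ q ∧ q ≤ k ∧
      Settled k q l ((sepStep k)^[k * (l / k)] ((sepStep l)^[phaseWeight k l k] D)) := by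
  have hw := h.weight_eq hp hpk
  obtain ⟨h1, h2, h3⟩ := iterate_sepStep_spaced (k := k) (l := l) (p := p) (D := D)
    (fun x hx y hy hx0 hxy hyl => by
      by_contra hlt
      have := eq_of_modEq_of_lt ((h.2 x hx0 (by omega)).1 hx) ((h.2 y (by omega) hyl).1 hy)
        hxy.le (by omega)
      omega)
    (fun x hx hx0 hxl => by
      by_contra hlt
      have := eq_of_modEq_of_lt ((h.2 x hx0 hxl).1 hx) (Nat.ModEq.refl p) (by omega) (by omega)
      omega)
    (phaseWeight k l k) (by rw [hw]; exact phaseWeight_anti hpk)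
  have h4 := phaseWeight_lt (l := l) hp hk hkl
  obtain ⟨q, hq1, hq2, hq3, hq⟩ := exists_settled_of_subsingleton hk
    (zero_mem_iterate h.1 (phaseWeight k l k))
    (fun x hx y hy hx0 hxy => by
      by_contra hyk
      have := h1 x hx y hy hx0 hxy (by omega)
      omega)
    (a := min (p + 1) k) (min_le_right _ _)
    (fun x hx hx0 hxk => by
      have h5 := h2 x hx hx0 (by omega)
      -- the remaining potential is too small for a separator still at `p`
      have h6 := le_weight hx hx0 (hxk.trans hkl)
      rcases Nat.lt_or_ge p x with h7 | h7
      · omega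
      · have : x = p := le_antisymm h7 h5
        subst this
        omega)
  exact ⟨q, hq1, hq2, hq3, hq.spread hk⟩

/-! ### The algorithm -/

/-- The word describing one round of the algorithm. -/
def roundWord (k l : ℕ) : List ℕ :=
  List.replicate (k * (l / k)) k ++ List.replicate (phaseWeight k l k) l

/-- The word of the algorithm after `i` rounds: a first run of moves `φ_k` makes the configuration
periodic, and the rounds follow. -/
def algWord (k l : ℕ) : ℕ → List ℕ
  | 0 => List.replicate (k * (l / k)) k ++ List.replicate (k ^ 2) k
  | i + 1 => roundWord k l ++ algWord k l i

theorem foldr_replicate_sepStep (t n : ℕ) (D : Set ℕ) :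
    (List.replicate t n).foldr sepStep D = (sepStep n)^[t] D := by
  induction t with
  | zero => rfl
  | succ t ih => rw [List.replicate_succ, List.foldr_cons, ih, Function.iterate_succ_apply']

theorem mem_algWord {k l i j : ℕ} (hj : j ∈ algWord k l i) : j = k ∨ j = l := by
  induction i with
  | zero =>
    simp only [algWord, List.mem_append, List.mem_replicate] at hj
    tauto
  | succ i ih =>
    simp only [algWord, roundWord, List.mem_append, List.mem_replicate] at hj
    tauto

theorem length_algWord (k l i : ℕ) : (algWord k l i).length =
    k * (l / k) + k ^ 2 + i * (k * (l / k) + phaseWeight k l k) := by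
  induction i with
  | zero => simp [algWord]
  | succ i ih => simp only [algWord, roundWord, List.length_append, ih,
      List.length_replicate]; ring

theorem algWord_settled {k l : ℕ} (hk : 1 ≤ k) (hkl : k < l) {D : Set ℕ} (h0 : 0 ∈ D) (i : ℕ) :
    ∃ p, 1 ≤ p ∧ min i k ≤ p ∧ p ≤ k ∧ Settled k p l ((algWord k l i).foldr sepStep D) := by
  induction i with
  | zero =>
    obtain ⟨q, hq1, hqk, hq⟩ := exists_settled_iterate hk (k ^ 2) D h0 (weight_le k D)
    refine ⟨q, hq1, by omega, hqk, ?_⟩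
    rw [algWord, List.foldr_append, foldr_replicate_sepStep, foldr_replicate_sepStep]
    exact hq.spread hk
  | succ i ih =>
    obtain ⟨p, hp1, hip, hpk, hp⟩ := ih
    obtain ⟨q, hq1, hpq, hqk, hq⟩ := round_phase hk hkl hp1 hpk hp
    refine ⟨q, hq1, by omega, hqk, ?_⟩
    rw [algWord, roundWord, List.foldr_append, List.foldr_append, foldr_replicate_sepStep,
      foldr_replicate_sepStep]
    exact hq

/-- Theorem 1 of the paper. For any integers `N ≥ 1` and
`1 ≤ k < l`, there is an algorithm using only the moves `φ_k` and `φ_l`, of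
length at most `N + 4l²`, which couples the first `N` balls. -/
theorem coupling_algorithm_exists (N k l : ℕ) (hN : 1 ≤ N) (hk : 1 ≤ k) (hkl : k < l) :
    ∃ w : List ℕ, (∀ j ∈ w, j = k ∨ j = l) ∧ w.length ≤ N + 4 * l ^ 2 ∧
      ∀ X Y : ℕ → ℕ, IsInfConf X → IsInfConf Y →
        proj N (applyAlg w X) = proj N (applyAlg w Y) := by
  have hw : ∀ j ∈ List.replicate N k ++ algWord k l k, j = k ∨ j = l := by
    intro j hj
    rcases List.mem_append.1 hj with h | h
    · exact Or.inl (List.eq_of_mem_replicate h)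
    · exact mem_algWord h
  refine ⟨_, hw, ?_, fun X Y hX hY => ?_⟩
  · rw [List.length_append, List.length_replicate, length_algWord]
    have h1 := mul_phaseWeight_le (l := l) hk
    have h2 : k * (l / k) ≤ l := Nat.mul_div_le l k
    have h3 : k * (k * (l / k)) ≤ l ^ 2 := by
      rw [sq]; exact Nat.mul_le_mul hkl.le h2
    have h4 : k ^ 2 ≤ l ^ 2 := Nat.pow_le_pow_left hkl.le 2
    have h5 : l ≤ l ^ 2 := Nat.le_self_pow (by norm_num) l
    rw [mul_add]
    omega
  · refine proj_eq_of_sepSet (isInfConf_applyAlg hX _) (isInfConf_applyAlg hY _) N ?_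
    rw [sepSet_applyAlg hX _, sepSet_applyAlg hY _, List.foldr_append, List.foldr_append,
      foldr_replicate_sepStep, foldr_replicate_sepStep]
    obtain ⟨p, -, hp, hpk, hsX⟩ := algWord_settled hk hkl (D := sepSet X) ⟨0, rfl⟩ k
    obtain ⟨q, -, hq, hqk, hsY⟩ := algWord_settled hk hkl (D := sepSet Y) ⟨0, rfl⟩ k
    obtain rfl : p = q := by omega
    intro x hx
    refine iterate_sepStep_local hkl.le (fun y hy => ?_) N x (by omega)
    rcases Nat.eq_zero_or_pos y with rfl | hy0
    · exact iff_of_true hsX.1 hsY.1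
    · exact (hsX.2 y hy0 hy).trans (hsY.2 y hy0 hy).symm
end

section
/- For any integer N ≥ 1, the algorithm φ_1^N (the move φ_1 composed N times) couples the first N balls. -/
/-! On a configuration whose rightmost bin is nonempty, `φ_1` creates a new rightmost bin with a
single ball. Hence after `N` moves the `N` rightmost bins hold one ball each, and they already
contain all the balls kept by the `N`-ball projection. -/

open Finset

theorem iterate_move_one (X : ℕ → ℕ) (hX : IsInfConf X) (N : ℕ) :
    (move 1)^[N] X = fun t => if t < N then 1 else X (t - N) := by
  induction N with
  | zero => simp
  | succ n ih =>
    have h0 : 1 ≤ (if 0 < n then 1 else X (0 - n)) := by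
      split_ifs
      · exact le_rfl
      · exact hX _
    rw [Function.iterate_succ_apply', ih, move, if_pos h0]
    funext t
    rcases t with _ | t
    · simp
    · simp

/-- The projection of `φ_1^N X` has one ball in each of the `N` rightmost bins and no other. -/
theorem proj_iterate_move_one (X : ℕ → ℕ) (hX : IsInfConf X) (N : ℕ) :
    proj N ((move 1)^[N] X) = fun t => if t < N then 1 else 0 := by
  rw [iterate_move_one X hX N]
  funext t
  unfold proj binSum
  rcases lt_or_ge t N with h | h
  · have hs : ∑ m ∈ Finset.range t, (if m < N then 1 else X (m - N)) = t := by
      rw [Finset.sum_congr rfl (g := fun _ => 1)]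
      · simp
      · intro m hm
        exact if_pos ((Finset.mem_range.mp hm).trans h)
    simp only [hs, if_pos h]
    omega
  · have hs : N ≤ ∑ m ∈ Finset.range t, (if m < N then 1 else X (m - N)) := by
      calc N = ∑ m ∈ Finset.range N, (if m < N then 1 else X (m - N)) := by
            rw [Finset.sum_congr rfl (g := fun _ => 1)]
            · simp
            · intro m hm
              exact if_pos (Finset.mem_range.mp hm)
        _ ≤ _ := Finset.sum_le_sum_of_subset (Finset.range_mono h)
    rw [Nat.sub_eq_zero_of_le hs, Nat.min_zero, if_neg (not_lt.mpr h)]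

/-- The algorithm `φ_1^N` couples the first `N` balls. -/
theorem iterate_move_one_couples (N : ℕ) (hN : 1 ≤ N) (X Y : ℕ → ℕ)
    (hX : IsInfConf X) (hY : IsInfConf Y) :
    proj N ((move 1)^[N] X) = proj N ((move 1)^[N] Y) := by
  rw [proj_iterate_move_one X hX, proj_iterate_move_one Y hY]
end

section
/- Let k ≥ 1 and n ≥ k be integers. If X and Y are two infinite configurations such that π_n(X) = π_n(Y), then π_{n+1}(φ_k(X)) = π_{n+1}(φ_k(Y)). -/
/-!
A configuration is encoded by its partial sums `S t = binSum X t`, and `π_n X` by the truncated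
partial sums `min n (S t)` (`proj_eq_iff`). A move adds one ball, so it turns `S` into `S + 1` on
the bins to the left of the new ball and leaves it unchanged to the right of it (up to a shift if a
new bin is created). On the left, `min (n + 1) (S t + 1) = min n (S t) + 1` is determined by `π_n X`.
On the right, `S t < k ≤ n`, so `S t` itself is determined by `π_n X`. The position of the new ball
depends only on which partial sums are at least `k ≤ n`, hence also only on `π_n X`.
-/

open Finset

theorem binSum_proj (n : ℕ) (X : ℕ → ℕ) (t : ℕ) : binSum (proj n X) t = min n (binSum X t) := by
  induction t with
  | zero => simp [binSum]
  | succ t ih =>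
    rw [binSum_succ, binSum_succ, ih, proj]
    omega

/-- The `n`-ball projection carries the same information as the partial sums truncated at `n`. -/
theorem proj_eq_iff (n : ℕ) (X Y : ℕ → ℕ) :
    proj n X = proj n Y ↔ ∀ t, min n (binSum X t) = min n (binSum Y t) := by
  constructor
  · intro h t
    rw [← binSum_proj, ← binSum_proj, h]
  · intro h
    funext t
    have h0 := h t
    have h1 := h (t + 1)
    rw [binSum_succ, binSum_succ] at h1
    simp only [proj]
    omega

theorem binSum_shift (X : ℕ → ℕ) (t : ℕ) :
    binSum (fun t => if t = 0 then 1 else X (t - 1)) (t + 1) = binSum X t + 1 := by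
  induction t with
  | zero => simp [binSum]
  | succ t ih =>
    rw [binSum_succ, ih, binSum_succ]
    simp only [Nat.add_eq_zero_iff, one_ne_zero, and_false, if_false, Nat.add_sub_cancel]
    omega

theorem binSum_add_ball (X : ℕ → ℕ) (c t : ℕ) :
    binSum (fun t => if t = c then X t + 1 else X t) t = binSum X t + if c < t then 1 else 0 := by
  induction t with
  | zero => simp [binSum]
  | succ t ih =>
    rw [binSum_succ, ih, binSum_succ]
    split_ifs <;> omega

/-- If `k ≥ 1`, `n ≥ k` and `π_n(X) = π_n(Y)`, then
`π_{n+1}(φ_k(X)) = π_{n+1}(φ_k(Y))`. -/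
theorem proj_succ_move_eq_of_proj_eq (k n : ℕ) (hk : 1 ≤ k) (hn : k ≤ n)
    (X Y : ℕ → ℕ) (hX : IsInfConf X) (hY : IsInfConf Y)
    (h : proj n X = proj n Y) :
    proj (n + 1) (move k X) = proj (n + 1) (move k Y) := by
  rw [proj_eq_iff] at h ⊢
  have hge : ∀ t, k ≤ binSum X t ↔ k ≤ binSum Y t := fun t => by
    have := h t
    omega
  have h0 : k ≤ X 0 ↔ k ≤ Y 0 := by simpa [binSum] using hge 1
  intro t
  by_cases hX0 : k ≤ X 0
  · rw [move, move, if_pos hX0, if_pos (h0.1 hX0)]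
    cases t with
    | zero => simp [binSum]
    | succ t =>
      rw [binSum_shift, binSum_shift]
      have := h t
      omega
  · have hset : {b : ℕ | k ≤ binSum Y (b + 1)} = {b : ℕ | k ≤ binSum X (b + 1)} := by
      ext b
      exact (hge (b + 1)).symm
    rw [move, move, if_neg hX0, if_neg (mt h0.2 hX0), hset, binSum_add_ball, binSum_add_ball]
    have ht := h t
    split_ifs with hc
    · omega
    · -- Bin `t` is not to the left of the new ball, so fewer than `k` balls lie to its right.
      have hlt : binSum X t < k := by
        cases t with
        | zero => simpa [binSum] using Nat.pos_of_ne_zero (by omega : k ≠ 0)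
        | succ t =>
          have hnot : t ∉ {b : ℕ | k ≤ binSum X (b + 1)} := Nat.notMem_of_lt_sInf (by omega)
          simpa using hnot
      omega
end

section
/- Let 1 ≤ k < l, write l = kd + r with d ≥ 1 and 1 ≤ r ≤ k, and let X_0, …, X_{k−1} be the distinguished l-configurations. Then for any 1 ≤ i ≤ k one has φ_k(X_{i mod k}) = X_{i−1}; in particular φ_k(X_i) = X_{i−1} for 1 ≤ i ≤ k−1 and φ_k(X_0) = X_{k−1}. -/
/-!
All distinguished configurations have the shape "`a` balls in bin `0`, then `m` bins with `k`
balls, then `b` balls in bin `m + 1`", recorded by `blockConf k a m b`. Indexing by `1 ≤ i ≤ k`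
(with `i = k` standing for `X_0`), `X_{i mod k}` is `blockConf k (r - i) d i` for `i < r` and
`blockConf k (k + r - i) (d - 1) i` for `r ≤ i`, the last bin being nonempty in both cases.
If bin `0` has fewer than `k` balls, the `k`-th ball is in bin `1`, so `φ_k` raises `a` and
lowers `b` by one (`moveFin_blockConf_of_lt`); this is the case `i ≠ r`. If `a = k`, which happens
exactly for `i = r`, a new bin with one ball is created and the old bin `0` joins the middle block
(`moveFin_blockConf_self`).
-/

open Finset

/-- The configuration with `a` balls in bin `0`, `k` balls in each of the bins `1, …, m`, and
`b` balls in bin `m + 1`; here `b = 0` is allowed. -/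
def blockConf (k a m b : ℕ) : ℕ → ℕ :=
  fun t => if t = 0 then a else if t ≤ m then k else if t = m + 1 then b else 0

lemma ofList_cons_replicate (k a m b : ℕ) :
    ofList (b :: (List.replicate m k ++ [a])) = blockConf k a m b := by
  funext t
  simp only [ofList, blockConf, List.reverse_cons, List.reverse_append, List.reverse_replicate,
    List.reverse_nil, List.nil_append, List.cons_append, List.getD_eq_getElem?_getD]
  rcases t with _ | t
  · simp
  · simp only [List.getElem?_cons_succ, List.getElem?_append, List.length_replicate,
      List.getElem?_replicate, List.getElem?_singleton]
    grind

lemma ofList_replicate (k a m : ℕ) :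
    ofList (List.replicate m k ++ [a]) = blockConf k a m 0 := by
  funext t
  simp only [ofList, blockConf, List.reverse_append, List.reverse_replicate,
    List.reverse_cons, List.reverse_nil, List.nil_append, List.cons_append,
    List.getD_eq_getElem?_getD]
  rcases t with _ | t
  · simp
  · simp only [List.getElem?_cons_succ, List.getElem?_replicate]
    grind

lemma removeLeft_blockConf (k a m b : ℕ) (hb : 0 < b) :
    removeLeft (blockConf k a m b) = blockConf k a m (b - 1) := by
  have hs : sSup {t : ℕ | 0 < blockConf k a m b t} = m + 1 := by
    apply IsGreatest.csSup_eq
    constructor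
    · simp [blockConf, hb]
    · intro t ht
      simp only [Set.mem_ofPred_eq, blockConf] at ht
      grind
  funext t
  rw [removeLeft, hs]
  clear hs
  simp only [blockConf]
  grind

lemma move_blockConf_of_lt (k a m b : ℕ) (ha : a < k) (hm : 1 ≤ m ∨ k ≤ a + b) :
    move k (blockConf k a m b) = blockConf k (a + 1) m b := by
  have hs : sInf {t : ℕ | k ≤ binSum (blockConf k a m b) (t + 1)} = 1 := by
    apply IsLeast.csInf_eq
    constructor
    · simp only [Set.mem_ofPred_eq, binSum, Finset.sum_range_succ, Finset.sum_range_zero, blockConf]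
      grind
    · intro t ht
      rcases t with _ | t
      · simp [binSum, blockConf] at ht
        omega
      · omega
  have h0 : ¬ k ≤ blockConf k a m b 0 := by simpa [blockConf] using ha
  funext t
  rw [move, if_neg h0, hs]
  clear hs h0
  simp only [blockConf]
  grind

lemma move_blockConf_self (k m b : ℕ) :
    move k (blockConf k k m b) = blockConf k 1 (m + 1) b := by
  have h0 : k ≤ blockConf k k m b 0 := by simp [blockConf]
  funext t
  rw [move, if_pos h0]
  clear h0
  simp only [blockConf]
  grind

/-- The side condition `1 ≤ m ∨ k ≤ a + b` says that bins `0` and `1` together contain at least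
`k` balls. -/
lemma moveFin_blockConf_of_lt (k a m b : ℕ) (ha : a < k) (hm : 1 ≤ m ∨ k ≤ a + b) (hb : 0 < b) :
    moveFin k (blockConf k a m b) = blockConf k (a + 1) m (b - 1) := by
  rw [moveFin, move_blockConf_of_lt k a m b ha hm, removeLeft_blockConf _ _ _ _ hb]

lemma moveFin_blockConf_self (k m b : ℕ) (hb : 0 < b) :
    moveFin k (blockConf k k m b) = blockConf k 1 (m + 1) (b - 1) := by
  rw [moveFin, move_blockConf_self, removeLeft_blockConf _ _ _ _ hb]

lemma distConf_of_lt (k d r i : ℕ) (hi : i < r) :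
    distConf k d r i = blockConf k (r - i) d i := by
  unfold distConf
  split_ifs with h0
  · subst h0
    simpa using ofList_replicate k r d
  · exact ofList_cons_replicate _ _ _ _

/-- Reducing `i` modulo `k` only affects `i = k`, where `X_0 = [k, …, k, r]` is read with its
leftmost bin of `k` balls as the last bin of the block form. -/
lemma distConf_mod_of_le (k d r i : ℕ) (hd : 1 ≤ d) (hr : 1 ≤ r) (hri : r ≤ i) (hik : i ≤ k) :
    distConf k d r (i % k) = blockConf k (k + r - i) (d - 1) i := by
  rcases hik.lt_or_eq with h | rfl
  · rw [Nat.mod_eq_of_lt h, distConf, if_neg (by omega), if_neg (by omega),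
      ofList_cons_replicate]
  · rw [Nat.mod_self, distConf_of_lt _ _ _ _ hr]
    funext t
    simp only [blockConf]
    grind

/-- For `1 ≤ k < l`, `l = kd + r` with `d ≥ 1`, `1 ≤ r ≤ k`, the
distinguished `l`-configurations satisfy `φ_k(X_{i mod k}) = X_{i-1}` for all
`1 ≤ i ≤ k`. -/
theorem moveFin_distConf (k l d r : ℕ) (hk : 1 ≤ k) (hkl : k < l) (hd : 1 ≤ d)
    (hr : 1 ≤ r) (hrk : r ≤ k) (hl : l = k * d + r) :
    ∀ i : ℕ, 1 ≤ i → i ≤ k →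
      moveFin k (distConf k d r (i % k)) = distConf k d r (i - 1) := by
  intro i hi hik
  rcases lt_trichotomy i r with h | rfl | h
  · rw [Nat.mod_eq_of_lt (by omega), distConf_of_lt k d r i h,
      distConf_of_lt k d r (i - 1) (by omega),
      moveFin_blockConf_of_lt _ _ _ _ (by omega) (Or.inl hd) hi]
    congr 1
    omega
  · rw [distConf_mod_of_le k d i i hd hr le_rfl hik, distConf_of_lt k d i (i - 1) (by omega),
      Nat.add_sub_cancel, moveFin_blockConf_self _ _ _ hi]
    congr 1 <;> omega
  · have hX : distConf k d r (i - 1) = blockConf k (k + r - (i - 1)) (d - 1) (i - 1) := by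
      rw [← distConf_mod_of_le k d r (i - 1) hd hr (by omega) (by omega),
        Nat.mod_eq_of_lt (by omega)]
    rw [distConf_mod_of_le k d r i hd hr h.le hik, hX,
      moveFin_blockConf_of_lt _ _ _ _ (by omega) (Or.inr (by omega)) hi]
    congr 1
    omega
end

section
/- Let l ≥ 2 and let Y_0 = [l] and Y_j = [j, l−j] for 1 ≤ j ≤ l−1 be l-configurations. Then for any 1 ≤ j ≤ l one has φ_l(Y_{j mod l}) = Y_{j−1}; in particular φ_l(Y_j) = Y_{j−1} for 1 ≤ j ≤ l−1 and φ_l(Y_0) = Y_{l−1}. -/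
/-!
With the convention `[0, l] = [l]`, every `Y_j` has the form `[j, l - j]` (`yConf_eq_pair`). For
`1 ≤ j < l` the `l`-th ball from the right sits in the left bin, so `φ_l` adds a ball to the right
bin (`move_pair`) and then removes one from the left bin (`removeLeft_pair`), giving
`[j - 1, l - j + 1] = Y_{j-1}`. For `j = l` the configuration is `Y_0 = [l]`; the move creates a new
rightmost bin, giving `[l, 1]` (`move_singleton`), and the removal leaves `[l - 1, 1] = Y_{l-1}`.
-/

open Finset

theorem ofList_pair (a b : ℕ) :
    ofList [a, b] = fun t => if t = 0 then b else if t = 1 then a else 0 := by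
  funext t
  rcases t with _ | _ | t <;> simp [ofList]

theorem ofList_singleton_eq_pair (b : ℕ) : ofList [b] = ofList [0, b] := by
  funext t
  rcases t with _ | _ | t <;> simp [ofList]

theorem removeLeft_pair {a : ℕ} (ha : 0 < a) (b : ℕ) :
    removeLeft (ofList [a, b]) = ofList [a - 1, b] := by
  have hmax : IsGreatest {x : ℕ | 0 < ofList [a, b] x} 1 := by
    refine ⟨by simpa [ofList_pair] using ha, fun x hx => ?_⟩
    by_contra hlt
    have h0 : x ≠ 0 := by omega
    have h1 : x ≠ 1 := by omega
    simp [ofList_pair, h0, h1] at hx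
  funext t
  rw [removeLeft, hmax.csSup_eq, ofList_pair, ofList_pair]
  rcases t with _ | _ | t <;> simp

/-- A full rightmost bin makes the move open a new rightmost bin. -/
theorem move_singleton (l : ℕ) : move l (ofList [l]) = ofList [l, 1] := by
  funext t
  rcases t with _ | _ | t <;> simp [move, ofList]

/-- The `l`-th ball of `[j, l - j]` is the leftmost ball, which lies in the left bin, so the
new ball falls into the right bin. -/
theorem move_pair {l j : ℕ} (hj : 0 < j) (hjl : j < l) :
    move l (ofList [j, l - j]) = ofList [j, l - j + 1] := by
  have hmin : IsLeast {x : ℕ | l ≤ binSum (ofList [j, l - j]) (x + 1)} 1 := by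
    refine ⟨?_, fun x hx => ?_⟩
    · simp only [Set.mem_ofPred_eq, binSum, ofList_pair, sum_range_succ, range_zero, sum_empty]
      norm_num
      omega
    · rcases x with _ | x
      · simp [binSum, ofList_pair] at hx
        omega
      · omega
  have hnot : ¬ l ≤ ofList [j, l - j] 0 := by
    simp only [ofList_pair, if_true]
    omega
  rw [move, if_neg hnot, hmin.csInf_eq, ofList_pair, ofList_pair]
  funext t
  rcases t with _ | _ | t <;> simp

/-- With the convention `[0, l] = [l]`, the two cases of `yConf` have the same form. -/
theorem yConf_eq_pair (l j : ℕ) : yConf l j = ofList [j, l - j] := by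
  by_cases hj : j = 0
  · simp [yConf, hj, ofList_singleton_eq_pair]
  · simp [yConf, hj]

/-- For `l ≥ 2`, the `l`-configurations `Y_0 = [l]`,
`Y_j = [j, l-j]` satisfy `φ_l(Y_{j mod l}) = Y_{j-1}` for all `1 ≤ j ≤ l`. -/
theorem moveFin_yConf (l : ℕ) (hl : 2 ≤ l) :
    ∀ j : ℕ, 1 ≤ j → j ≤ l → moveFin l (yConf l (j % l)) = yConf l (j - 1) := by
  intro j hj hjl
  rw [yConf_eq_pair l (j - 1), moveFin]
  rcases hjl.eq_or_lt with rfl | hlt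
  · rw [Nat.mod_self, yConf, if_pos rfl, move_singleton, removeLeft_pair hj]
    congr 3
    omega
  · rw [Nat.mod_eq_of_lt hlt, yConf_eq_pair, move_pair hj hlt, removeLeft_pair hj]
    congr 3
    omega
end

section
/- (Lemma 3) Let 2 ≤ k < l, write l = kd + r with d ≥ 1 and 1 ≤ r ≤ k, and let f : {0, …, k−1} → {0, …, k−1} be defined by f(i) = max(k − l + d·i, 0) if 0 ≤ i ≤ k−r−1 and f(i) = max(k − (d+1)(k−i), 0) if k−r ≤ i ≤ k−1. Then f(0) = 0, and f(i) < i for every 1 ≤ i ≤ k−1. -/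
open Finset

/-- Lemma 3. For `2 ≤ k < l`, `l = kd + r`, the map `f`
satisfies `f(0) = 0` and `f(i) < i` for every `1 ≤ i ≤ k-1`. -/
theorem fMap_properties (k l d r : ℕ) (hk : 2 ≤ k) (hkl : k < l) (hd : 1 ≤ d)
    (hr : 1 ≤ r) (hrk : r ≤ k) (hl : l = k * d + r) :
    fMap k l d r 0 = 0 ∧ ∀ i : ℕ, 1 ≤ i → i ≤ k - 1 → fMap k l d r i < i := by
  constructor
  · unfold fMap
    split_ifs
    · omega
    · exact Nat.sub_eq_zero_of_le (Nat.le_mul_of_pos_left k (Nat.succ_pos d))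
  · intro i hi hik
    -- With `m = k - i ≥ 1`, both branches reduce to `m ≤ d * m`: the first bound reads
    -- `m < d * m + r`, the second `m < (d + 1) * m`.
    obtain ⟨m, rfl⟩ : ∃ m, k = i + m := ⟨k - i, by omega⟩
    have hm : m ≤ d * m := Nat.le_mul_of_pos_left m hd
    unfold fMap
    rw [hl, Nat.add_sub_cancel_left, Nat.add_mul, Nat.add_mul, Nat.mul_comm i d,
      Nat.mul_comm m d]
    split_ifs <;> omega
end

section
/- Let 2 ≤ k < l, write l = kd + r with d ≥ 1 and 1 ≤ r ≤ k, and let f : {0, …, k−1} → {0, …, k−1} be defined by f(i) = max(k − l + d·i, 0) if 0 ≤ i ≤ k−r−1 and f(i) = max(k − (d+1)(k−i), 0) if k−r ≤ i ≤ k−1. Then the (k−1)-fold iterate of f sends every element to 0: f^{k−1}(i) = 0 for all 0 ≤ i ≤ k−1. -/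
/-!
For `i < k` the map satisfies `f(i) ≤ i - 1` (truncated): with `a = k - i ≥ 1`, the first branch is
`i - (d - 1) a - r` and the second is `i - d a`, and `r`, `d`, `a` are all at least `1`.
Hence `k - 1` iterations bring any `i ≤ k - 1` down to `0`.
-/

open Finset

theorem fMap_le_pred (k d r i : ℕ) (hd : 1 ≤ d) (hr : 1 ≤ r) (hi : i < k) :
    fMap k (k * d + r) d r i ≤ i - 1 := by
  obtain ⟨a, rfl⟩ := Nat.exists_eq_add_of_lt hi
  have h : a + 1 ≤ d * (a + 1) := Nat.le_mul_of_pos_left _ hd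
  unfold fMap
  split_ifs
  · have e : (i + a + 1) * d = d * i + d * (a + 1) := by ring
    omega
  · have e : (d + 1) * (i + a + 1 - i) = d * (a + 1) + (a + 1) := by
      rw [show i + a + 1 - i = a + 1 by omega]; ring
    omega

theorem fMap_iterate_le (k d r i n : ℕ) (hd : 1 ≤ d) (hr : 1 ≤ r) (hi : i < k) :
    (fMap k (k * d + r) d r)^[n] i ≤ i - n := by
  induction n with
  | zero => simp
  | succ n ih =>
    rw [Function.iterate_succ_apply']
    have := fMap_le_pred k d r _ hd hr (show (fMap k (k * d + r) d r)^[n] i < k by omega)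
    omega

/-- The `(k-1)`-fold iterate of `f` sends every element of
`{0, …, k-1}` to `0`. -/
theorem fMap_iterate_eq_zero (k l d r : ℕ) (hk : 2 ≤ k) (hkl : k < l) (hd : 1 ≤ d)
    (hr : 1 ≤ r) (hrk : r ≤ k) (hl : l = k * d + r) :
    ∀ i : ℕ, i ≤ k - 1 → (fMap k l d r)^[k - 1] i = 0 := by
  intro i hi
  subst hl
  have := fMap_iterate_le k d r i (k - 1) hd hr (by omega)
  omega
end

section
/- (Lemma 4, part 1) Let l ≥ 2 and let i_1, …, i_p be p ≥ 1 positive integers summing to l. Set n = Σ_{j=1}^{p−2} (p−1−j) i_j. Then φ_l^n([i_1, i_2, …, i_p]) = Y_{l−i_p}, where [i_1, …, i_p] is the l-configuration whose bins from left to right contain i_1, …, i_p balls, and Y_j = [j, l−j] for 1 ≤ j ≤ l−1 and Y_0 = [l]. -/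
/-!
On an `l`-configuration with at least two bins, the `l`-th ball counted from the right lies in the
leftmost nonempty bin, so `φ_l` just transfers one ball from the leftmost bin to its right
neighbour: `[a + 1, b, …] ↦ [a, b + 1, …]`, where a leading `0` is harmless (`ofList_zero_cons`).
This is `moveFin_ofList`. Hence `a` applications merge the two leftmost bins,
`[a, b, …] ↦ [a + b, …]` (`iterate_moveFin_merge`). Merging until two bins remain gives `Y_{l - i_p}`,
and the number of moves spent is counted by the recursion `moveCount_merge`.
-/

open Finset

theorem ofList_cons (a : ℕ) (M : List ℕ) (t : ℕ) :
    ofList (a :: M) t = if t = M.length then a else ofList M t := by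
  unfold ofList
  rw [List.reverse_cons]
  rcases lt_trichotomy t M.length with h | h | h
  · rw [List.getD_append _ _ _ _ (by simpa using h), if_neg h.ne]
  · subst h
    rw [List.getD_append_right _ _ _ _ (by simp)]
    simp
  · rw [List.getD_append_right _ _ _ _ (by simpa using h.le), if_neg h.ne',
      List.getD_eq_default _ _ (by simp; omega), List.getD_eq_default _ _ (by simp; omega)]

theorem ofList_of_length_le (M : List ℕ) {t : ℕ} (h : M.length ≤ t) : ofList M t = 0 :=
  List.getD_eq_default _ _ (by simpa using h)

theorem ofList_zero_cons (M : List ℕ) : ofList (0 :: M) = ofList M := by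
  funext t
  rw [ofList_cons]
  split_ifs with h
  · rw [ofList_of_length_le M h.ge]
  · rfl

theorem binSum_ofList_length (M : List ℕ) : binSum (ofList M) M.length = M.sum := by
  induction M with
  | nil => simp [binSum]
  | cons a M ih =>
    unfold binSum at ih ⊢
    rw [List.length_cons, Finset.sum_range_succ, List.sum_cons, ← ih, ofList_cons, if_pos rfl,
      add_comm]
    congr 1
    refine Finset.sum_congr rfl fun t ht => ?_
    rw [ofList_cons, if_neg (Finset.mem_range.mp ht).ne]

theorem binSum_mono (X : ℕ → ℕ) : Monotone (binSum X) := fun _ _ h =>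
  Finset.sum_le_sum_of_subset (Finset.range_subset_range.mpr h)

/-- If the leftmost nonempty bin of an `l`-configuration is bin `q + 1`, then `φ_l` transfers one
ball from bin `q + 1` to bin `q`. -/
theorem moveFin_eq_transfer {l q : ℕ} {X : ℕ → ℕ} (hq : 0 < X (q + 1))
    (hzero : ∀ t, q + 1 < t → X t = 0) (hsum : binSum X (q + 2) = l) :
    moveFin l X = fun t => if t = q + 1 then X t - 1 else if t = q then X t + 1 else X t := by
  have hlt : binSum X (q + 1) < l := by
    rw [← hsum]
    unfold binSum
    rw [Finset.sum_range_succ _ (q + 1)]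
    omega
  have h0 : ¬ l ≤ X 0 := by
    have h1 : binSum X 1 ≤ binSum X (q + 1) := binSum_mono X (by omega)
    have h2 : binSum X 1 = X 0 := by simp [binSum]
    omega
  have hInf : sInf {b : ℕ | l ≤ binSum X (b + 1)} = q + 1 := by
    refine IsLeast.csInf_eq ⟨hsum.ge, fun b hb => ?_⟩
    by_contra! hbq
    have h1 : binSum X (b + 1) ≤ binSum X (q + 1) := binSum_mono X (by omega)
    have h2 : l ≤ binSum X (b + 1) := hb
    omega
  have hmove : move l X = fun t => if t = q then X t + 1 else X t := by
    simp only [move, if_neg h0, hInf, Nat.add_sub_cancel]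
  have hSup : sSup {b : ℕ | 0 < move l X b} = q + 1 := by
    refine IsGreatest.csSup_eq ⟨?_, fun b hb => ?_⟩
    · simpa [hmove] using hq
    · by_contra! hbq
      have h2 : 0 < move l X b := hb
      simp only [hmove, hzero b hbq] at h2
      split_ifs at h2 <;> omega
  funext t
  simp only [moveFin, removeLeft, hSup]
  simp only [hmove]
  split_ifs <;> first | rfl | omega

theorem moveFin_ofList (l a b : ℕ) (R : List ℕ) (hsum : ((a + 1) :: b :: R).sum = l) :
    moveFin l (ofList ((a + 1) :: b :: R)) = ofList (a :: (b + 1) :: R) := by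
  rw [moveFin_eq_transfer (q := R.length)]
  · funext t
    simp only [ofList_cons, List.length_cons]
    split_ifs <;> rfl
  · simp [ofList_cons]
  · intro t ht
    exact ofList_of_length_le _ (by simpa using ht)
  · rw [← hsum, ← binSum_ofList_length]
    rfl

theorem iterate_moveFin_merge (l a b : ℕ) (R : List ℕ) (hsum : (a :: b :: R).sum = l) :
    (moveFin l)^[a] (ofList (a :: b :: R)) = ofList ((a + b) :: R) := by
  induction a generalizing b with
  | zero => simp [ofList_zero_cons]
  | succ a ih =>
    rw [Function.iterate_succ_apply, moveFin_ofList l a b R hsum, ih (b + 1)]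
    · congr 2
      ring
    · rw [← hsum]
      simp only [List.sum_cons]
      ring

/-- Merging the two leftmost of at least three bins lowers the number of required moves by the
content of the leftmost bin. -/
theorem moveCount_merge (a b c : ℕ) (R : List ℕ) :
    ∑ j ∈ Finset.range (a :: b :: c :: R).length,
        ((a :: b :: c :: R).length - 2 - j) * (a :: b :: c :: R).getD j 0 =
      (∑ j ∈ Finset.range ((a + b) :: c :: R).length,
        (((a + b) :: c :: R).length - 2 - j) * ((a + b) :: c :: R).getD j 0) + a := by
  simp only [List.length_cons]
  rw [Finset.sum_range_succ', Finset.sum_range_succ', Finset.sum_range_succ' _ (R.length + 1)]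
  have h : ∀ j, R.length + 1 + 1 + 1 - 2 - (j + 1 + 1) = R.length + 1 + 1 - 2 - (j + 1) := by
    omega
  have h0 : R.length + 1 + 1 + 1 - 2 - 0 = R.length + 1 := by omega
  have h1 : R.length + 1 + 1 + 1 - 2 - (0 + 1) = R.length := by omega
  have h2 : R.length + 1 + 1 - 2 - 0 = R.length := by omega
  simp only [h, h0, h1, h2, List.getD_cons_succ, List.getD_cons_zero]
  ring

/-- The claim for configurations with at least two bins, by repeatedly merging the two
leftmost ones. -/
theorem iterate_moveFin_cons_cons (l a b : ℕ) (R : List ℕ) (ha : 0 < a)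
    (hsum : (a :: b :: R).sum = l) :
    (moveFin l)^[∑ j ∈ Finset.range (a :: b :: R).length,
        ((a :: b :: R).length - 2 - j) * (a :: b :: R).getD j 0] (ofList (a :: b :: R)) =
      yConf l (l - (a :: b :: R).getLast (by simp)) := by
  induction R generalizing a b with
  | nil =>
    have h1 : l - b = a := by simp at hsum; omega
    have h2 : l - a = b := by simp at hsum; omega
    simp [yConf, h1, h2, ha.ne']
  | cons c R ih =>
    rw [moveCount_merge, Function.iterate_add_apply, iterate_moveFin_merge l a b _ hsum,
      ih (a + b) c (by omega) (by rw [← hsum]; simp only [List.sum_cons]; ring)]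
    simp

/-- Lemma 4, part 1. If `i_1, …, i_p` are positive integers
summing to `l ≥ 2` and `n = Σ_{j=1}^{p-2} (p-1-j) i_j` (here computed with the
0-indexed list `L`, the coefficient of `L[j]` being `p - 2 - j`), then
`φ_l^n([i_1, …, i_p]) = Y_{l - i_p}`. -/
theorem iterate_moveFin_to_yConf (l : ℕ) (hl : 2 ≤ l) (L : List ℕ) (hL : L ≠ [])
    (hpos : ∀ x ∈ L, 0 < x) (hsum : L.sum = l) :
    (moveFin l)^[∑ j ∈ Finset.range L.length, (L.length - 2 - j) * L.getD j 0]
        (ofList L) = yConf l (l - L.getLast hL) := by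
  match L, hL with
  | [a], _ =>
    have h : a = l := by simpa using hsum
    simp [yConf, h]
  | a :: b :: R, _ => exact iterate_moveFin_cons_cons l a b R (hpos a (by simp)) hsum
end
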